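/- arXiv:1005.0724 — 2 statements merged into one kernel-verified Lean document; each statement's English description precedes it below -/
import Mathlib

section
/- Let eta : Q_p^* -> C^* be an unramified group homomorphism and set alpha = eta(p)^{-1} * p and beta = eta(p)^{-1} * p^{-1}. Let v : G -> C be a function such that v(b*g) = eta(det(b)) * |a/d| * v(g) for every b = [[a,b0],[0,d]] in B and g in G, and such that v(k) = 1 for every k in K. Then for every integer r >= 0 and every k in K: v(k*gamma^r) = alpha^s * beta^{r-s} if k lies in I_s \ I_{s+1} for some 0 <= s <= r-1, and v(k*gamma^r) = alpha^r if k lies in I_r. Moreover, for every r >= 1: v(k*gamma^r) - alpha * v(k*gamma^{r-1}) equals alpha^s * beta^{r-s} - alpha^{s+1} * beta^{r-1-s} if k lies in I_s \ I_{s+1} with 0 <= s <= r-1 and equals 0 if k lies in I_r; and v(k*gamma^r) - beta * v(k*gamma^{r-1}) equals alpha^r * (1 - beta/alpha) if k lies in I_r and equals 0 if k lies in K \ I_r. -/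
open Matrix

noncomputable section

variable (p : ℕ) [Fact p.Prime]

/-- The underlying matrix of an element of `GL₂(ℚ_p)`. -/
def mat (g : GL (Fin 2) ℚ_[p]) : Matrix (Fin 2) (Fin 2) ℚ_[p] := g

/-- Membership in `K = GL₂(ℤ_p)`: all entries are `p`-adic integers and the
determinant is a unit of `ℤ_p`. -/
def inK (g : GL (Fin 2) ℚ_[p]) : Prop :=
  (∀ i j, ‖mat p g i j‖ ≤ 1) ∧ ‖(mat p g).det‖ = 1

/-- Membership in the Iwahori subgroup `I_n` of `K`: for `n = 0`, `I_0 = K`;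
for `n ≥ 1`, the diagonal entries are units of `ℤ_p` and the lower left entry
lies in `p^n ℤ_p`. -/
def inI (n : ℕ) (g : GL (Fin 2) ℚ_[p]) : Prop :=
  inK p g ∧ (n = 0 ∨
    (‖mat p g 0 0‖ = 1 ∧ ‖mat p g 1 1‖ = 1 ∧ ‖mat p g 1 0‖ ≤ (p : ℝ) ^ (-(n : ℤ))))

/-- `p` as a unit of `ℚ_p`. -/
def pu : ℚ_[p]ˣ :=
  Units.mk0 (p : ℚ_[p]) (by exact_mod_cast (Fact.out : p.Prime).ne_zero)

/-- The element `γ = diag(p⁻¹, 1)` of `GL₂(ℚ_p)`. -/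
def gamma : GL (Fin 2) ℚ_[p] :=
  Matrix.GeneralLinearGroup.mkOfDetNeZero !![(p : ℚ_[p])⁻¹, 0; 0, 1] (by
    have hp : (p : ℚ_[p]) ≠ 0 := by exact_mod_cast (Fact.out : p.Prime).ne_zero
    simp [Matrix.det_fin_two_of, hp])

/-- A character of `ℚ_p^×` is unramified if it is trivial on `ℤ_p^×`. -/
def Unramified (μ : ℚ_[p]ˣ →* ℂˣ) : Prop :=
  ∀ u : ℚ_[p]ˣ, ‖(u : ℚ_[p])‖ = 1 → μ u = 1

theorem val_aux (η : ℚ_[p]ˣ →* ℂˣ) (hη : Unramified p η)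
    (v : GL (Fin 2) ℚ_[p] → ℂ)
    (hvB : ∀ (b g : GL (Fin 2) ℚ_[p]), mat p b 1 0 = 0 →
      v (b * g) = (η (Matrix.GeneralLinearGroup.det b) : ℂ) *
        (‖mat p b 0 0 / mat p b 1 1‖ : ℝ) * v g)
    (hvK : ∀ k : GL (Fin 2) ℚ_[p], inK p k → v k = 1)
    (g k : GL (Fin 2) ℚ_[p]) (hk : inK p k) (h10 : mat p (g * k) 1 0 = 0) :
    v g = (η (Matrix.GeneralLinearGroup.det g) : ℂ) *
      ((‖(mat p g).det‖ / ‖mat p (g * k) 1 1‖ ^ 2 : ℝ) : ℂ) := by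
  have hkdet : η (Matrix.GeneralLinearGroup.det k) = 1 := hη _ hk.2
  have hdet : (mat p g).det * (mat p k).det = mat p (g * k) 0 0 * mat p (g * k) 1 1 := by
    have : (mat p (g * k)).det = (mat p g).det * (mat p k).det := by
      simp [mat]
    rw [← this, Matrix.det_fin_two, h10]; ring
  have hkinv : inK p k⁻¹ := by
    have hd : (mat p k).det ≠ 0 := by
      intro h; have := hk.2; rw [h] at this; simp at this
    have hm : mat p k⁻¹ = (mat p k)⁻¹ := by simp [mat]
    refine ⟨?_, ?_⟩
    · intro i j
      rw [hm, Matrix.inv_def, Ring.inverse_eq_inv', Matrix.adjugate_fin_two]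
      have h2 := hk.2
      fin_cases i <;> fin_cases j <;> simp [h2] <;> exact hk.1 _ _
    · rw [hm, Matrix.det_nonsing_inv, Ring.inverse_eq_inv', norm_inv, hk.2, inv_one]
  have h := hvB (g * k) k⁻¹ h10
  rw [mul_inv_cancel_right, hvK _ hkinv, map_mul, map_mul, hkdet, mul_one, mul_one] at h
  rw [h]
  congr 2
  have hn : ‖(mat p g).det‖ = ‖mat p (g * k) 0 0‖ * ‖mat p (g * k) 1 1‖ := by
    rw [← norm_mul, ← hdet, norm_mul, hk.2, mul_one]
  rw [norm_div, hn]
  by_cases h0 : ‖mat p (g * k) 1 1‖ = 0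
  · simp [h0]
  · field_simp

theorem val_right (η : ℚ_[p]ˣ →* ℂˣ) (hη : Unramified p η)
    (v : GL (Fin 2) ℚ_[p] → ℂ)
    (hvB : ∀ (b g : GL (Fin 2) ℚ_[p]), mat p b 1 0 = 0 →
      v (b * g) = (η (Matrix.GeneralLinearGroup.det b) : ℂ) *
        (‖mat p b 0 0 / mat p b 1 1‖ : ℝ) * v g)
    (hvK : ∀ k : GL (Fin 2) ℚ_[p], inK p k → v k = 1)
    (g : GL (Fin 2) ℚ_[p]) (h0 : mat p g 1 1 ≠ 0) (hle : ‖mat p g 1 0‖ ≤ ‖mat p g 1 1‖) :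
    v g = (η (Matrix.GeneralLinearGroup.det g) : ℂ) *
      ((‖(mat p g).det‖ / ‖mat p g 1 1‖ ^ 2 : ℝ) : ℂ) := by
  let k : GL (Fin 2) ℚ_[p] := Matrix.GeneralLinearGroup.mkOfDetNeZero
    !![1, 0; -(mat p g 1 0 / mat p g 1 1), 1] (by simp [Matrix.det_fin_two_of])
  have hkm : mat p k = !![1, 0; -(mat p g 1 0 / mat p g 1 1), 1] := rfl
  have hmm : mat p (g * k) = mat p g * mat p k := rfl
  have hk : inK p k := by
    refine ⟨?_, ?_⟩
    · intro i j
      rw [hkm]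
      fin_cases i <;> fin_cases j <;> simp
      exact div_le_one_of_le₀ hle (norm_nonneg _)
    · rw [hkm]; simp [Matrix.det_fin_two_of]
  have e11 : mat p (g * k) 1 1 = mat p g 1 1 := by
    rw [hmm, hkm]; simp [Matrix.mul_apply, Fin.sum_univ_two]
  rw [val_aux p η hη v hvB hvK g k hk ?_, e11]
  rw [hmm, hkm]; simp [Matrix.mul_apply, Fin.sum_univ_two]; field_simp; ring

theorem val_left (η : ℚ_[p]ˣ →* ℂˣ) (hη : Unramified p η)
    (v : GL (Fin 2) ℚ_[p] → ℂ)
    (hvB : ∀ (b g : GL (Fin 2) ℚ_[p]), mat p b 1 0 = 0 →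
      v (b * g) = (η (Matrix.GeneralLinearGroup.det b) : ℂ) *
        (‖mat p b 0 0 / mat p b 1 1‖ : ℝ) * v g)
    (hvK : ∀ k : GL (Fin 2) ℚ_[p], inK p k → v k = 1)
    (g : GL (Fin 2) ℚ_[p]) (h0 : mat p g 1 0 ≠ 0) (hle : ‖mat p g 1 1‖ ≤ ‖mat p g 1 0‖) :
    v g = (η (Matrix.GeneralLinearGroup.det g) : ℂ) *
      ((‖(mat p g).det‖ / ‖mat p g 1 0‖ ^ 2 : ℝ) : ℂ) := by
  let k : GL (Fin 2) ℚ_[p] := Matrix.GeneralLinearGroup.mkOfDetNeZero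
    !![-(mat p g 1 1 / mat p g 1 0), 1; 1, 0] (by simp [Matrix.det_fin_two_of])
  have hkm : mat p k = !![-(mat p g 1 1 / mat p g 1 0), 1; 1, 0] := rfl
  have hmm : mat p (g * k) = mat p g * mat p k := rfl
  have hk : inK p k := by
    refine ⟨?_, ?_⟩
    · intro i j
      rw [hkm]
      fin_cases i <;> fin_cases j <;> simp
      exact div_le_one_of_le₀ hle (norm_nonneg _)
    · rw [hkm]; simp [Matrix.det_fin_two_of]
  have e11 : mat p (g * k) 1 1 = mat p g 1 0 := by
    rw [hmm, hkm]; simp [Matrix.mul_apply, Fin.sum_univ_two]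
  rw [val_aux p η hη v hvB hvK g k hk ?_, e11]
  rw [hmm, hkm]; simp [Matrix.mul_apply, Fin.sum_univ_two]; field_simp; ring

theorem gamma_pow_mat (r : ℕ) :
    mat p (gamma p ^ r) = !![((p : ℚ_[p])⁻¹) ^ r, 0; 0, 1] := by
  induction r with
  | zero => ext i j; fin_cases i <;> fin_cases j <;> simp [mat]
  | succ n ih =>
    have h : mat p (gamma p ^ (n + 1)) = mat p (gamma p ^ n) * mat p (gamma p) := by
      rw [pow_succ]; rfl
    have hg : mat p (gamma p) = !![(p : ℚ_[p])⁻¹, 0; 0, 1] := rfl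
    rw [h, ih, hg]
    simp [Matrix.mul_fin_two, pow_succ]

theorem det_gamma : Matrix.GeneralLinearGroup.det (gamma p) = (pu p)⁻¹ := by
  ext
  have h : ((Matrix.GeneralLinearGroup.det (gamma p) : ℚ_[p]ˣ) : ℚ_[p])
    = Matrix.det !![(p : ℚ_[p])⁻¹, 0; 0, 1] := rfl
  rw [h]; simp [Matrix.det_fin_two_of, pu]

theorem inK_units (k : GL (Fin 2) ℚ_[p]) (hk : inK p k) (hc : ‖mat p k 1 0‖ < 1) :
    ‖mat p k 0 0‖ = 1 ∧ ‖mat p k 1 1‖ = 1 := by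
  have h00 := hk.1 0 0
  have h11 := hk.1 1 1
  have h01 := hk.1 0 1
  have hd := hk.2
  rw [Matrix.det_fin_two] at hd
  have hbc : ‖mat p k 0 1 * mat p k 1 0‖ < 1 := by
    rw [norm_mul]; nlinarith [norm_nonneg (mat p k 0 1), norm_nonneg (mat p k 1 0)]
  have had : 1 ≤ ‖mat p k 0 0‖ * ‖mat p k 1 1‖ := by
    by_contra! hlt
    rw [← norm_mul] at hlt
    have h1 := Padic.nonarchimedean (mat p k 0 0 * mat p k 1 1) (-(mat p k 0 1 * mat p k 1 0))
    rw [← sub_eq_add_neg, norm_neg, hd] at h1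
    exact absurd h1 (not_le.mpr (max_lt hlt hbc))
  constructor <;> nlinarith [norm_nonneg (mat p k 0 0), norm_nonneg (mat p k 1 1)]

theorem norm_c (k : GL (Fin 2) ℚ_[p]) (s : ℕ) (h : inI p s k) (h' : ¬ inI p (s + 1) k) :
    ‖mat p k 1 0‖ = (p : ℝ) ^ (-(s : ℤ)) := by
  have hle : ‖mat p k 1 0‖ ≤ (p : ℝ) ^ (-(s : ℤ)) := by
    rcases h.2 with h0 | h0
    · subst h0; simpa using h.1.1 1 0
    · exact h0.2.2
  refine le_antisymm hle ?_
  by_contra! hlt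
  apply h'
  have hp1 : (1 : ℝ) < p := by exact_mod_cast (Fact.out : p.Prime).one_lt
  have hlt1 : ‖mat p k 1 0‖ < 1 := hlt.trans_le
    (zpow_le_one_of_nonpos₀ hp1.le (by simp))
  obtain ⟨ha, hd⟩ := inK_units p k h.1 hlt1
  refine ⟨h.1, Or.inr ⟨ha, hd, ?_⟩⟩
  rw [Padic.norm_le_pow_iff_norm_lt_pow_add_one]
  have e : -((s + 1 : ℕ) : ℤ) + 1 = -(s : ℤ) := by push_cast; ring
  rw [e]; exact hlt

theorem inI_pred (k : GL (Fin 2) ℚ_[p]) (s : ℕ) (h : inI p (s + 1) k) : inI p s k := by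
  refine ⟨h.1, Or.inr ?_⟩
  obtain ⟨h1, h2, h3⟩ := h.2.resolve_left (by simp)
  have hp1 : (1 : ℝ) ≤ p := by exact_mod_cast (Fact.out : p.Prime).one_lt.le
  exact ⟨h1, h2, h3.trans (zpow_le_zpow_right₀ hp1 (by push_cast; omega))⟩

theorem exists_s (k : GL (Fin 2) ℚ_[p]) (hk : inK p k) (r : ℕ) (h : ¬ inI p r k) :
    ∃ s, s + 1 ≤ r ∧ inI p s k ∧ ¬ inI p (s + 1) k := by
  induction r with
  | zero => exact absurd ⟨hk, Or.inl rfl⟩ h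
  | succ n ih =>
    by_cases hn : inI p n k
    · exact ⟨n, le_rfl, hn, h⟩
    · obtain ⟨s, h1, h2⟩ := ih hn
      exact ⟨s, by omega, h2⟩

/-- Lemma «calcul-SP-NR2»: values of the translates `γ^r · v^K` of the
`K`-invariant vector `v^K` in `Ind_B^G ((η ∘ det) δ^{1/2})`, for `η`
unramified, together with the difference formulas. -/
theorem stmt6 (η : ℚ_[p]ˣ →* ℂˣ) (hη : Unramified p η)
    (α β : ℂ)
    (hα : α = ((η (pu p) : ℂ))⁻¹ * (p : ℂ))
    (hβ : β = ((η (pu p) : ℂ))⁻¹ * (p : ℂ)⁻¹)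
    (v : GL (Fin 2) ℚ_[p] → ℂ)
    (hvB : ∀ (b g : GL (Fin 2) ℚ_[p]), mat p b 1 0 = 0 →
      v (b * g) = (η (Matrix.GeneralLinearGroup.det b) : ℂ) *
        (‖mat p b 0 0 / mat p b 1 1‖ : ℝ) * v g)
    (hvK : ∀ k : GL (Fin 2) ℚ_[p], inK p k → v k = 1) :
    ∀ (r : ℕ) (k : GL (Fin 2) ℚ_[p]),
      -- values of `γ^r · v^K`
      ((∀ s : ℕ, s + 1 ≤ r → inI p s k → ¬ inI p (s + 1) k →
          v (k * gamma p ^ r) = α ^ s * β ^ (r - s)) ∧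
        (inI p r k → v (k * gamma p ^ r) = α ^ r)) ∧
      -- difference formulas, for `r ≥ 1`
      (1 ≤ r →
        ((∀ s : ℕ, s + 1 ≤ r → inI p s k → ¬ inI p (s + 1) k →
            v (k * gamma p ^ r) - α * v (k * gamma p ^ (r - 1)) =
              α ^ s * β ^ (r - s) - α ^ (s + 1) * β ^ (r - 1 - s)) ∧
          (inI p r k →
            v (k * gamma p ^ r) - α * v (k * gamma p ^ (r - 1)) = 0)) ∧
        ((inI p r k →
            v (k * gamma p ^ r) - β * v (k * gamma p ^ (r - 1)) =
              α ^ r * (1 - β / α)) ∧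
          (inK p k → ¬ inI p r k →
            v (k * gamma p ^ r) - β * v (k * gamma p ^ (r - 1)) = 0))) := by
  have hp0 : (p : ℚ_[p]) ≠ 0 := by exact_mod_cast (Fact.out : p.Prime).ne_zero
  have hpC : (p : ℂ) ≠ 0 := by exact_mod_cast (Fact.out : p.Prime).ne_zero
  have hp1 : (1 : ℝ) < p := by exact_mod_cast (Fact.out : p.Prime).one_lt
  have hpR : (p : ℝ) ≠ 0 := by positivity
  have hηC : (η (pu p) : ℂ) ≠ 0 := (η (pu p)).ne_zero
  have hα0 : α ≠ 0 := by rw [hα]; exact mul_ne_zero (inv_ne_zero hηC) hpC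
  have hmat : ∀ (r : ℕ) (k : GL (Fin 2) ℚ_[p]),
      mat p (k * gamma p ^ r) = mat p k * !![((p : ℚ_[p])⁻¹) ^ r, 0; 0, 1] := by
    intro r k; rw [← gamma_pow_mat]; rfl
  have h10 : ∀ (r : ℕ) (k : GL (Fin 2) ℚ_[p]),
      ‖mat p (k * gamma p ^ r) 1 0‖ = ‖mat p k 1 0‖ * (p : ℝ) ^ r := by
    intro r k; rw [hmat]; simp [Matrix.mul_apply, Fin.sum_univ_two]
  have h11 : ∀ (r : ℕ) (k : GL (Fin 2) ℚ_[p]),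
      mat p (k * gamma p ^ r) 1 1 = mat p k 1 1 := by
    intro r k; rw [hmat]; simp [Matrix.mul_apply, Fin.sum_univ_two]
  have hdet : ∀ (r : ℕ) (k : GL (Fin 2) ℚ_[p]), inK p k →
      ‖(mat p (k * gamma p ^ r)).det‖ = (p : ℝ) ^ r := by
    intro r k hk; rw [hmat, Matrix.det_mul, norm_mul, hk.2]; simp [Matrix.det_fin_two_of]
  have heta : ∀ (r : ℕ) (k : GL (Fin 2) ℚ_[p]), inK p k →
      (η (Matrix.GeneralLinearGroup.det (k * gamma p ^ r)) : ℂ) = ((η (pu p) : ℂ)⁻¹) ^ r := by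
    intro r k hk
    have : η (Matrix.GeneralLinearGroup.det k) = 1 := hη _ hk.2
    rw [map_mul, map_mul, this, map_pow, det_gamma]
    simp
  have A : ∀ (r : ℕ) (k : GL (Fin 2) ℚ_[p]) (s : ℕ), s + 1 ≤ r → inI p s k → ¬ inI p (s + 1) k →
          v (k * gamma p ^ r) = α ^ s * β ^ (r - s) := by
    intro r k s hs h h'
    have hc := norm_c p k s h h'
    obtain ⟨m, rfl⟩ := Nat.exists_eq_add_of_le (show s ≤ r by omega)
    have hN : ‖mat p (k * gamma p ^ (s + m)) 1 0‖ = (p : ℝ) ^ m := by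
      rw [h10, hc, pow_add, _root_.zpow_neg, zpow_natCast]; field_simp
    rw [val_left p η hη v hvB hvK _ ?_ ?_, heta _ _ h.1, hdet _ _ h.1, hN, hα, hβ]
    · rw [Nat.add_sub_cancel_left]
      push_cast
      simp only [pow_add, mul_pow, inv_pow]
      field_simp
    · rw [← norm_ne_zero_iff, hN]; positivity
    · rw [hN, h11]
      exact (h.1.1 1 1).trans (one_le_pow₀ hp1.le)
  have B : ∀ (r : ℕ) (k : GL (Fin 2) ℚ_[p]), inI p r k → v (k * gamma p ^ r) = α ^ r := by
    intro r k h
    rcases Nat.eq_zero_or_pos r with rfl | hr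
    · simpa using hvK k h.1
    obtain ⟨ha, hd, hc⟩ := h.2.resolve_left (by omega)
    rw [val_right p η hη v hvB hvK _ ?_ ?_, heta _ _ h.1, hdet _ _ h.1, h11, hd, hα]
    · push_cast
      rw [mul_pow]; simp
    · rw [← norm_ne_zero_iff, h11, hd]; simp
    · rw [h10, h11, hd]
      calc _ ≤ (p : ℝ) ^ (-(r : ℤ)) * (p : ℝ) ^ r := by gcongr
        _ = 1 := by rw [_root_.zpow_neg, zpow_natCast]; field_simp
        _ ≤ 1 := le_rfl
  intro r k
  refine ⟨⟨A r k, B r k⟩, fun hr => ?_⟩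
  obtain ⟨n, rfl⟩ := Nat.exists_eq_add_of_le' hr
  simp only [Nat.add_sub_cancel]
  have A' : ∀ s : ℕ, s + 1 ≤ n + 1 → inI p s k → ¬ inI p (s + 1) k →
      v (k * gamma p ^ n) = α ^ s * β ^ (n - s) := by
    intro s hs h h'
    rcases Nat.lt_or_ge s n with hlt | hge
    · exact A n k s hlt h h'
    · obtain rfl : s = n := by omega
      rw [B s k h]; simp
  refine ⟨⟨?_, ?_⟩, ?_, ?_⟩
  · intro s hs h h'
    rw [A _ k s hs h h', A' s hs h h']; ring
  · intro h
    rw [B _ k h, B _ k (inI_pred p k n h)]; ring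
  · intro h
    rw [B _ k h, B _ k (inI_pred p k n h)]; field_simp; ring
  · intro hk h
    obtain ⟨s, hs, h1, h2⟩ := exists_s p k hk _ h
    rw [A _ k s hs h1 h2, A' s hs h1 h2, Nat.succ_sub (by omega : s ≤ n), pow_succ]; ring
end
end

section
/- For all integers s >= 1 and r >= 0, one has K ∩ (B * gamma^r * I_s * gamma^{-r}) = I_{s+r}, where B * gamma^r * I_s * gamma^{-r} denotes the set {b * gamma^r * k * gamma^{-r} : b in B, k in I_s}. -/
open Matrix

noncomputable section

variable (p : ℕ) [Fact p.Prime]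

lemma p_ne : (p : ℚ_[p]) ≠ 0 := by exact_mod_cast (Fact.out : p.Prime).ne_zero

lemma mat_mul (a b : GL (Fin 2) ℚ_[p]) : mat p (a * b) = mat p a * mat p b := rfl

lemma mat_one : mat p 1 = 1 := rfl

lemma mat_gamma : mat p (gamma p) = !![(p : ℚ_[p])⁻¹, 0; 0, 1] := rfl

lemma mat_gamma_pow (r : ℕ) : mat p (gamma p ^ r) = !![((p : ℚ_[p]) ^ r)⁻¹, 0; 0, 1] := by
  induction r with
  | zero => simp [mat_one, Matrix.one_fin_two]
  | succ n ih =>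
    rw [pow_succ, mat_mul, ih, mat_gamma, pow_succ, mul_inv]
    simp

lemma conj_eq (r : ℕ) (g b k : GL (Fin 2) ℚ_[p]) :
    g = b * gamma p ^ r * k * (gamma p)⁻¹ ^ r ↔
      mat p g * !![((p : ℚ_[p]) ^ r)⁻¹, 0; 0, 1] =
        mat p b * !![((p : ℚ_[p]) ^ r)⁻¹, 0; 0, 1] * mat p k := by
  rw [inv_pow, eq_mul_inv_iff_mul_eq, ← mat_gamma_pow, ← mat_mul, ← mat_mul, ← mat_mul]
  exact Units.ext_iff

/-- Equation «intersection»: `K ∩ B γ^r I_s γ^{-r} = I_{s+r}` for `s ≥ 1`. -/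
theorem stmt7 (s r : ℕ) (hs : 1 ≤ s) :
    {g : GL (Fin 2) ℚ_[p] | inK p g ∧
        ∃ b k : GL (Fin 2) ℚ_[p], mat p b 1 0 = 0 ∧ inI p s k ∧
          g = b * gamma p ^ r * k * (gamma p)⁻¹ ^ r} =
      {g : GL (Fin 2) ℚ_[p] | inI p (s + r) g} := by
  have hp := p_ne p
  have hpr : (p : ℚ_[p]) ^ r ≠ 0 := pow_ne_zero _ hp
  have hp1 : (1 : ℝ) < p := by exact_mod_cast (Fact.out : p.Prime).one_lt
  have hp0 : (p : ℝ) ≠ 0 := by positivity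
  have hnr : ‖(p : ℚ_[p]) ^ r‖ = (p : ℝ) ^ (-(r : ℤ)) := by
    rw [norm_pow, Padic.norm_p]; simp
  have hsr : (p : ℝ) ^ (-((s + r : ℕ) : ℤ)) = (p : ℝ) ^ (-(s : ℤ)) * (p : ℝ) ^ (-(r : ℤ)) := by
    rw [← zpow_add₀ hp0]; congr 1; push_cast; ring
  ext g
  simp only [Set.mem_setOf_eq]
  constructor
  · rintro ⟨hg, b, k, hb, ⟨hk, hk'⟩, h⟩
    refine ⟨hg, Or.inr ?_⟩
    obtain ⟨h00, h11, h10⟩ := hk'.resolve_left (by omega)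
    rw [conj_eq] at h
    have e0 := congrFun (congrFun h 1) 0
    have e1 := congrFun (congrFun h 1) 1
    simp [Matrix.mul_apply, Fin.sum_univ_two, hb] at e0 e1
    have e0' : mat p g 1 0 = mat p b 1 1 * mat p k 1 0 * (p : ℚ_[p]) ^ r := by
      field_simp at e0; linear_combination e0
    have hb1 : ‖mat p b 1 1‖ ≤ 1 := by
      have := hg.1 1 1
      rwa [e1, norm_mul, h11, mul_one] at this
    have hc : ‖mat p g 1 0‖ ≤ (p : ℝ) ^ (-((s + r : ℕ) : ℤ)) := by
      rw [e0', norm_mul, norm_mul, hnr, hsr]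
      gcongr
      calc _ ≤ 1 * ‖mat p k 1 0‖ := by gcongr
        _ ≤ _ := by simpa using h10
    have hlt : ‖mat p g 1 0‖ < 1 := by
      refine hc.trans_lt (zpow_lt_one_of_neg₀ hp1 (by omega))
    have hdet := hg.2
    rw [Matrix.det_fin_two] at hdet
    have h2 : ‖mat p g 0 1 * mat p g 1 0‖ < 1 := by
      rw [norm_mul]
      calc _ ≤ 1 * ‖mat p g 1 0‖ := by gcongr; exact hg.1 0 1
        _ < 1 := by simpa using hlt
    have h3 : 1 ≤ ‖mat p g 0 0 * mat p g 1 1‖ := by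
      by_contra! hcon
      have := Padic.nonarchimedean (mat p g 0 0 * mat p g 1 1)
        (-(mat p g 0 1 * mat p g 1 0))
      rw [← sub_eq_add_neg, norm_neg, hdet] at this
      exact absurd this (not_le.mpr (max_lt hcon h2))
    rw [norm_mul] at h3
    have a0 := hg.1 0 0
    have a1 := hg.1 1 1
    have n0 := norm_nonneg (mat p g 0 0)
    have n1 := norm_nonneg (mat p g 1 1)
    exact ⟨by nlinarith, by nlinarith, hc⟩
  · rintro ⟨hg, hg'⟩
    obtain ⟨h00, h11, h10⟩ := hg'.resolve_left (by omega)
    have hd : mat p g 1 1 ≠ 0 := by rw [← norm_ne_zero_iff, h11]; simp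
    have hD : (mat p g).det ≠ 0 := by rw [← norm_ne_zero_iff, hg.2]; simp
    have hA : ‖(mat p g).det / mat p g 1 1‖ = 1 := by rw [norm_div, hg.2, h11]; simp
    have hc : ‖mat p g 1 0 / (p : ℚ_[p]) ^ r‖ ≤ (p : ℝ) ^ (-(s : ℤ)) := by
      rw [norm_div, hnr, div_le_iff₀ (by positivity), ← hsr]; exact h10
    have hs1 : (p : ℝ) ^ (-(s : ℤ)) ≤ 1 := (zpow_lt_one_of_neg₀ hp1 (by omega)).le
    have hkd : (!![(mat p g).det / mat p g 1 1, 0; mat p g 1 0 / (p : ℚ_[p]) ^ r, mat p g 1 1]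
        : Matrix (Fin 2) (Fin 2) ℚ_[p]).det = (mat p g).det := by
      rw [Matrix.det_fin_two_of]; field_simp; ring
    let b : GL (Fin 2) ℚ_[p] := Matrix.GeneralLinearGroup.mkOfDetNeZero
      !![1, mat p g 0 1 / mat p g 1 1; 0, 1] (by simp [Matrix.det_fin_two_of])
    let k : GL (Fin 2) ℚ_[p] := Matrix.GeneralLinearGroup.mkOfDetNeZero
      !![(mat p g).det / mat p g 1 1, 0; mat p g 1 0 / (p : ℚ_[p]) ^ r, mat p g 1 1]
      (by rw [hkd]; exact hD)
    have hb : mat p b = !![1, mat p g 0 1 / mat p g 1 1; 0, 1] := rfl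
    have hk : mat p k = !![(mat p g).det / mat p g 1 1, 0;
      mat p g 1 0 / (p : ℚ_[p]) ^ r, mat p g 1 1] := rfl
    refine ⟨hg, b, k, by simp [hb], ⟨⟨?_, ?_⟩, Or.inr ⟨?_, ?_, ?_⟩⟩, ?_⟩
    · intro i j
      rw [hk]
      fin_cases i <;> fin_cases j
      · exact hA.le
      · simp
      · exact hc.trans hs1
      · exact h11.le
    · rw [hk, hkd]; exact hg.2
    · rw [hk]; exact hA
    · rw [hk]; exact h11
    · rw [hk]; exact hc
    · rw [conj_eq, hb, hk]
      ext i j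
      fin_cases i <;> fin_cases j <;>
        simp [Matrix.mul_apply, Fin.sum_univ_two, Matrix.det_fin_two] <;> field_simp <;> ring
end
end
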